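/- Let 𝔊 be a homothecy invariant collection of open rectangles (rectangular parallelepipeds, not necessarily axis-parallel) in ℝⁿ, and let μ, ν be locally finite nonnegative Borel measures on ℝⁿ, with μ nonzero and doubling with respect to 𝔊. Then the following are equivalent: (i) there exist γ ∈ (0,1) and c > 0 such that ν({x ∈ ℝⁿ : M_{𝔊,μ}(1_E)(x) > γ}) ≤ c·ν(E) for every Borel set E ⊆ ℝⁿ; (ii) there exists p₀ > 1 such that M_{𝔊,μ} is bounded on L^p(ν) for every p > p₀. -/

import Mathlib

open MeasureTheory Set Filter
open scoped ENNReal Topology Pointwise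

noncomputable section

/-- The maximal operator `M_{𝔅,μ}` associated to a measure `μ` and a collection `𝔅`
of subsets of `ℝⁿ`, applied to `f` at the point `x` (valued in `ℝ≥0∞`; it equals `0`
outside the union of `𝔅`). -/
noncomputable def maxOp {n : ℕ} (μ : Measure (EuclideanSpace ℝ (Fin n)))
    (𝔅 : Set (Set (EuclideanSpace ℝ (Fin n))))
    (f : EuclideanSpace ℝ (Fin n) → ℝ) (x : EuclideanSpace ℝ (Fin n)) : ℝ≥0∞ :=
  ⨆ (B : Set (EuclideanSpace ℝ (Fin n))) (_ : B ∈ 𝔅) (_ : x ∈ B) (_ : 0 < μ B),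
    (∫⁻ y in B, ENNReal.ofReal |f y| ∂μ) / μ B

/-- A collection of sets is homothecy invariant if it is closed under translations and
positive dilations. -/
def HomothecyInvariant {n : ℕ} (𝔅 : Set (Set (EuclideanSpace ℝ (Fin n)))) : Prop :=
  ∀ B ∈ 𝔅, (∀ y : EuclideanSpace ℝ (Fin n), y +ᵥ B ∈ 𝔅) ∧ (∀ s : ℝ, 0 < s → s • B ∈ 𝔅)

/-- `μ` is doubling with respect to the collection `𝔅`, with constant `Δ`: whenever
`B ∈ 𝔅` and a translate of the dilate `2·B` contains `B`, its measure is at most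
`Δ·μ(B)`. -/
def DoublingWrt {n : ℕ} (μ : Measure (EuclideanSpace ℝ (Fin n)))
    (𝔅 : Set (Set (EuclideanSpace ℝ (Fin n)))) (Δ : ℝ) : Prop :=
  ∀ B ∈ 𝔅, ∀ σ : EuclideanSpace ℝ (Fin n),
    B ⊆ σ +ᵥ (2 : ℝ) • B → μ (σ +ᵥ (2 : ℝ) • B) ≤ ENNReal.ofReal Δ * μ B

/-- A member of a basis of convex sets: nonempty, bounded, open and convex. -/
def IsConvexBasisSet {n : ℕ} (B : Set (EuclideanSpace ℝ (Fin n))) : Prop :=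
  B.Nonempty ∧ Bornology.IsBounded B ∧ IsOpen B ∧ Convex ℝ B

/-- An open axis-parallel rectangle in `ℝⁿ`. -/
def IsAxisRect {n : ℕ} (R : Set (EuclideanSpace ℝ (Fin n))) : Prop :=
  ∃ a b : Fin n → ℝ, (∀ i, a i < b i) ∧ R = {x | ∀ i, x i ∈ Set.Ioo (a i) (b i)}

/-- An open rectangle (possibly rotated rectangular parallelepiped) in `ℝⁿ`:
the image of an open axis-parallel rectangle under a rigid motion. -/
def IsRect {n : ℕ} (R : Set (EuclideanSpace ℝ (Fin n))) : Prop :=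
  ∃ (f : EuclideanSpace ℝ (Fin n) ≃ᵢ EuclideanSpace ℝ (Fin n))
    (S : Set (EuclideanSpace ℝ (Fin n))), IsAxisRect S ∧ R = f '' S

/-- An open axis-parallel cube in `ℝⁿ`. -/
def IsAxisCube {n : ℕ} (C : Set (EuclideanSpace ℝ (Fin n))) : Prop :=
  ∃ (a : Fin n → ℝ) (s : ℝ), 0 < s ∧ C = {x | ∀ i, x i ∈ Set.Ioo (a i) (a i + s)}

/-- `M_{𝔅,μ}` is bounded on `L^p(ν)`. -/
def BoundedOnLp {n : ℕ} (μ ν : Measure (EuclideanSpace ℝ (Fin n)))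
    (𝔅 : Set (Set (EuclideanSpace ℝ (Fin n)))) (p : ℝ) : Prop :=
  ∃ C : ℝ≥0∞, C ≠ ⊤ ∧ ∀ f : EuclideanSpace ℝ (Fin n) → ℝ, Measurable f →
    ∫⁻ x, maxOp μ 𝔅 f x ^ p ∂ν ≤ C * ∫⁻ x, ENNReal.ofReal |f x| ^ p ∂ν

/-- The Tauberian condition for `M_{𝔅,μ}` at level `γ`, with constant `c`, with respect
to the measure `ν`. -/
def TauberianCond {n : ℕ} (μ ν : Measure (EuclideanSpace ℝ (Fin n)))
    (𝔅 : Set (Set (EuclideanSpace ℝ (Fin n)))) (γ c : ℝ) : Prop :=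
  ∀ E : Set (EuclideanSpace ℝ (Fin n)), MeasurableSet E →
    ν {x | ENNReal.ofReal γ < maxOp μ 𝔅 (E.indicator 1) x} ≤ ENNReal.ofReal c * ν E

/-- The standard open dyadic box of scale `2^k` and position `m` in `ℝⁿ`. -/
def stdBox (n : ℕ) (k : ℤ) (m : Fin n → ℤ) : Set (Fin n → ℝ) :=
  {x | ∀ i, (m i : ℝ) * 2 ^ k < x i ∧ x i < ((m i : ℝ) + 1) * 2 ^ k}

/-- A parametrization of a rectangular grid: a rigid motion composed with a positive
diagonal scaling. The image of the standard unit box under such a map is a rectangle. -/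
def IsRectParam {n : ℕ} (T : (Fin n → ℝ) → EuclideanSpace ℝ (Fin n)) : Prop :=
  ∃ (f : EuclideanSpace ℝ (Fin n) ≃ᵢ EuclideanSpace ℝ (Fin n)) (l : Fin n → ℝ),
    (∀ i, 0 < l i) ∧
    ∀ x, T x = f ((WithLp.equiv 2 (Fin n → ℝ)).symm (fun i => l i * x i))

/-- The dyadic mesh generated by a rectangle parametrized by `T`. -/
def dyadicMesh {n : ℕ} (T : (Fin n → ℝ) → EuclideanSpace ℝ (Fin n)) :
    Set (Set (EuclideanSpace ℝ (Fin n))) :=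
  {S | ∃ (k : ℤ) (m : Fin n → ℤ), S = T '' stdBox n k m}

/-- `S` is a dyadic descendant of the rectangle `R`, `s` generations inside `R`. -/
def DyadicDescendant {n : ℕ} (R S : Set (EuclideanSpace ℝ (Fin n))) (s : ℕ) : Prop :=
  ∃ T : (Fin n → ℝ) → EuclideanSpace ℝ (Fin n), IsRectParam T ∧
    T '' stdBox n 0 0 = R ∧
    ∃ m : Fin n → ℤ, (∀ i, 0 ≤ m i ∧ m i < 2 ^ s) ∧ S = T '' stdBox n (-(s : ℤ)) m

/-- The family of all homothetic copies (translates and positive dilates) of `R₀`. -/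
def homCopies {n : ℕ} (R₀ : Set (EuclideanSpace ℝ (Fin n))) :
    Set (Set (EuclideanSpace ℝ (Fin n))) :=
  {S | ∃ (y : EuclideanSpace ℝ (Fin n)) (s : ℝ), 0 < s ∧ S = y +ᵥ s • R₀}

/-- Iterated halo sets `H_β^k(E)`: `H_β^0(E) = E` and
`H_β^{k+1}(E) = {x : M_{𝔊,μ}(1_{H_β^k(E)})(x) ≥ β}`. -/
def Hiter {n : ℕ} (μ : Measure (EuclideanSpace ℝ (Fin n)))
    (𝔊 : Set (Set (EuclideanSpace ℝ (Fin n)))) (β : ℝ)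
    (E : Set (EuclideanSpace ℝ (Fin n))) : ℕ → Set (EuclideanSpace ℝ (Fin n))
  | 0 => E
  | k + 1 => {x | ENNReal.ofReal β ≤ maxOp μ 𝔊 ((Hiter μ 𝔊 β E k).indicator 1) x}

/-- The Muckenhoupt `A_{p,𝔅}` condition for a weight `w` (with respect to Lebesgue
measure); here `1 - p/(p-1) = 1 - p'`. -/
def MuckenhouptAp {n : ℕ} (𝔅 : Set (Set (EuclideanSpace ℝ (Fin n))))
    (w : EuclideanSpace ℝ (Fin n) → ℝ) (p : ℝ) : Prop :=
  ∃ C : ℝ≥0∞, C ≠ ⊤ ∧ ∀ B ∈ 𝔅,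
    ((∫⁻ x in B, ENNReal.ofReal (w x) ∂volume) / volume B) *
      (((∫⁻ x in B, ENNReal.ofReal (w x) ^ (1 - p / (p - 1)) ∂volume) / volume B) ^ (p - 1))
      ≤ C

/-- `𝔅` is a Muckenhoupt basis: for every `1 < p < ∞` and every weight `w ∈ A_{p,𝔅}`,
the maximal operator `M_𝔅` is bounded on `L^p(w)`. -/
def MuckenhouptBasis {n : ℕ} (𝔅 : Set (Set (EuclideanSpace ℝ (Fin n)))) : Prop :=
  ∀ p : ℝ, 1 < p → ∀ w : EuclideanSpace ℝ (Fin n) → ℝ, (∀ x, 0 ≤ w x) →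
    LocallyIntegrable w volume → MuckenhouptAp 𝔅 w p →
    BoundedOnLp volume (volume.withDensity fun x => ENNReal.ofReal (w x)) 𝔅 p

end


section CubeLemma

variable {X : Type*} [NormedAddCommGroup X] [NormedSpace ℝ X]

/-- Homothets of a ball with respect to a point are nested. -/
lemma homBall_mono (x c : X) (r : ℝ) (hx : ‖c - x‖ ≤ r) {s t : ℝ} (hst : s ≤ t) :
    Metric.ball (x + s • (c - x)) (s * r) ⊆ Metric.ball (x + t • (c - x)) (t * r) := by
  intro y hy
  rw [Metric.mem_ball, dist_eq_norm] at hy ⊢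
  have h1 : y - (x + t • (c - x)) = (y - (x + s • (c - x))) - (t - s) • (c - x) := by
    module
  rw [h1]
  have h2 : ‖(t - s) • (c - x)‖ ≤ (t - s) * r := by
    rw [norm_smul, Real.norm_of_nonneg (by linarith)]
    exact mul_le_mul_of_nonneg_left hx (by linarith)
  calc _ ≤ ‖y - (x + s • (c - x))‖ + ‖(t - s) • (c - x)‖ := norm_sub_le _ _
    _ < s * r + (t - s) * r := by linarith
    _ = t * r := by ring

variable [MeasurableSpace X] [BorelSpace X] [SecondCountableTopology X]

lemma unifLocDoubling_of_ball (μ : Measure X) (K : NNReal)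
    (hK : ∀ c r, 0 < r → μ (Metric.ball c (2 * r)) ≤ K * μ (Metric.ball c r)) :
    IsUnifLocDoublingMeasure μ := by
  refine ⟨⟨K * K, ?_⟩⟩
  filter_upwards [self_mem_nhdsWithin] with ε hε x
  have hε' : (0 : ℝ) < ε := hε
  calc μ (Metric.closedBall x (2 * ε)) ≤ μ (Metric.ball x (2 * (2 * ε))) :=
        measure_mono (Metric.closedBall_subset_ball (by linarith))
    _ ≤ K * μ (Metric.ball x (2 * ε)) := hK _ _ (by linarith)
    _ ≤ K * (K * μ (Metric.ball x ε)) := by gcongr; exact hK _ _ hε'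
    _ ≤ K * (K * μ (Metric.closedBall x ε)) := by
        gcongr; exact Metric.ball_subset_closedBall
    _ = _ := by push_cast; ring

lemma sphere_null (μ : Measure X) [IsLocallyFiniteMeasure μ] (K : NNReal)
    (hK : ∀ c r, 0 < r → μ (Metric.ball c (2 * r)) ≤ K * μ (Metric.ball c r))
    (c : X) (r : ℝ) (hr : 0 < r) : μ (Metric.sphere c r) = 0 := by
  have := unifLocDoubling_of_ball μ K hK
  have h := IsUnifLocDoublingMeasure.ae_tendsto_measure_inter_div μ (Metric.sphere c r) 2
  rw [ae_restrict_iff' Metric.isClosed_sphere.measurableSet] at h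
  refine measure_mono_null ?_ (ae_iff.1 h)
  intro x hx hcon
  have hxr : ‖c - x‖ = r := by
    rw [← dist_eq_norm, dist_comm]; exact hx
  have h1 := hcon hx (l := 𝓝[>] (0 : ℝ)) (fun t => x + t • (c - x)) (fun t => t * r / 2) ?_ ?_
  · have h2 : Tendsto (fun t : ℝ => μ (Metric.sphere c r ∩
        Metric.closedBall (x + t • (c - x)) (t * r / 2)) /
        μ (Metric.closedBall (x + t • (c - x)) (t * r / 2))) (𝓝[>] (0 : ℝ)) (𝓝 0) := by
      refine tendsto_const_nhds.congr' ?_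
      filter_upwards [Ioc_mem_nhdsGT (zero_lt_one' ℝ)] with t ht
      have : Metric.sphere c r ∩ Metric.closedBall (x + t • (c - x)) (t * r / 2) = ∅ := by
        rw [← Set.disjoint_iff_inter_eq_empty]
        refine Set.disjoint_left.2 fun y hy hy' => ?_
        have h3 : y ∈ Metric.ball (x + t • (c - x)) (t * r) :=
          Metric.closedBall_subset_ball (by nlinarith [mul_pos ht.1 hr]) hy'
        have h4 := homBall_mono x c r hxr.le ht.2 h3
        simp only [one_smul, add_sub_cancel, one_mul, Metric.mem_ball] at h4
        rw [Metric.mem_sphere] at hy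
        linarith
      rw [this]; simp
    exact zero_ne_one (tendsto_nhds_unique h2 h1)
  · refine tendsto_nhdsWithin_iff.2 ⟨?_, ?_⟩
    · have : Tendsto (fun t : ℝ => t * r / 2) (𝓝 0) (𝓝 (0 * r / 2)) := by
        apply Continuous.tendsto; fun_prop
      simp only [zero_mul, zero_div] at this
      exact this.mono_left nhdsWithin_le_nhds
    · filter_upwards [self_mem_nhdsWithin] with t ht
      have : (0 : ℝ) < t := ht
      simp only [mem_Ioi]; positivity
  · filter_upwards [self_mem_nhdsWithin] with t ht
    have h0 : (0 : ℝ) < t := ht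
    rw [Metric.mem_closedBall, dist_eq_norm, sub_add_cancel_left, norm_neg, norm_smul, hxr,
      Real.norm_of_nonneg h0.le]
    linarith

lemma closedBall_measure_eq (μ : Measure X) [IsLocallyFiniteMeasure μ] (K : NNReal)
    (hK : ∀ c r, 0 < r → μ (Metric.ball c (2 * r)) ≤ K * μ (Metric.ball c r))
    (c : X) (r : ℝ) (hr : 0 < r) : μ (Metric.closedBall c r) = μ (Metric.ball c r) := by
  refine le_antisymm ?_ (measure_mono Metric.ball_subset_closedBall)
  rw [← Metric.ball_union_sphere]
  refine (measure_union_le _ _).trans ?_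
  rw [sphere_null μ K hK c r hr, add_zero]

/-- Selecting, for almost every point of `E ∩ Q`, a good ball. -/
lemma good_ball (μ : Measure X) [IsLocallyFiniteMeasure μ] (K : NNReal)
    (hK : ∀ c r, 0 < r → μ (Metric.ball c (2 * r)) ≤ K * μ (Metric.ball c r))
    (hfin : ∀ c r, μ (Metric.ball c r) ≠ ⊤)
    (γ : ℝ≥0∞) (hγ : γ < 1) (E : Set X) (c : X) (r : ℝ) (hr : 0 < r)
    (hE : μ (E ∩ Metric.ball c r) ≤ γ * μ (Metric.ball c r)) (U : Set X)
    (hU : ∀ c' r', 0 < r' → γ * μ (Metric.ball c' r') < μ (E ∩ Metric.ball c' r') →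
      Metric.ball c' r' ⊆ U) :
    ∀ᵐ x ∂(μ.restrict E), x ∈ Metric.ball c r → ∃ c' r', 0 < r' ∧ r' ≤ r ∧
      x ∈ Metric.ball c' r' ∧ Metric.ball c' r' ⊆ Metric.ball c r ∧ Metric.ball c' r' ⊆ U ∧
      μ (E ∩ Metric.ball c' r') ≤ γ * μ (Metric.ball c' r') := by
  have := unifLocDoubling_of_ball μ K hK
  filter_upwards [IsUnifLocDoublingMeasure.ae_tendsto_measure_inter_div μ E 1] with x hx hxQ
  have hcx : ‖c - x‖ < r := by rw [← dist_eq_norm, dist_comm]; exact hxQ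
  set Q : ℝ → Set X := fun t => Metric.ball (x + t • (c - x)) (t * r) with hQ
  have hmono : ∀ {s t}, s ≤ t → Q s ⊆ Q t := fun hst => homBall_mono x c r hcx.le hst
  have hQ1 : Q 1 = Metric.ball c r := by simp [hQ]
  have hxt : ∀ t, 0 < t → x ∈ Q t := by
    intro t ht
    simp only [hQ]
    rw [Metric.mem_ball, dist_eq_norm, sub_add_cancel_left, norm_neg, norm_smul,
      Real.norm_of_nonneg ht.le]
    exact mul_lt_mul_of_pos_left hcx ht
  have hlim := hx (l := 𝓝[>] (0 : ℝ)) (fun t => x + t • (c - x)) (fun t => t * r) ?_ ?_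
  rotate_left
  · refine tendsto_nhdsWithin_iff.2 ⟨?_, ?_⟩
    · have : Tendsto (fun t : ℝ => t * r) (𝓝 0) (𝓝 (0 * r)) := by
        apply Continuous.tendsto; fun_prop
      simp only [zero_mul] at this
      exact this.mono_left nhdsWithin_le_nhds
    · filter_upwards [self_mem_nhdsWithin] with t ht
      have : (0 : ℝ) < t := ht
      simp only [mem_Ioi]; positivity
  · filter_upwards [self_mem_nhdsWithin] with t ht
    rw [one_mul]
    exact Metric.ball_subset_closedBall (hxt t ht)
  set A : Set ℝ := {t | 0 < t ∧ t ≤ 1 ∧ γ * μ (Q t) < μ (E ∩ Q t)} with hA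
  have hAne : A.Nonempty := by
    have h1 := (hlim.eventually (lt_mem_nhds hγ)).and (Ioc_mem_nhdsGT (zero_lt_one' ℝ))
    obtain ⟨t, ht, ht0, ht1⟩ := h1.exists
    refine ⟨t, ht0, ht1, ?_⟩
    have htr : 0 < t * r := by positivity
    rw [closedBall_measure_eq μ K hK _ _ htr] at ht
    have h2 := ENNReal.mul_lt_of_lt_div ht
    refine h2.trans_le ?_
    calc _ ≤ μ ((E ∩ Q t) ∪ Metric.sphere (x + t • (c - x)) (t * r)) := by
          apply measure_mono
          rw [← Metric.ball_union_sphere]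
          rintro y ⟨hy, hy' | hy'⟩
          · exact Or.inl ⟨hy, hy'⟩
          · exact Or.inr hy'
      _ ≤ _ := measure_union_le _ _
      _ = _ := by rw [sphere_null μ K hK _ _ htr, add_zero]
  have hAbdd : BddAbove A := ⟨1, fun t ht => ht.2.1⟩
  set T := sSup A with hT
  have hT0 : 0 < T := by
    obtain ⟨t, ht⟩ := hAne
    exact ht.1.trans_le (le_csSup hAbdd ht)
  have hT1 : T ≤ 1 := csSup_le hAne fun t ht => ht.2.1
  refine ⟨x + T • (c - x), T * r, by positivity, by nlinarith, hxt T hT0, ?_, ?_, ?_⟩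
  · rw [← hQ1]; exact hmono hT1
  · intro y hy
    by_cases hTA : T ∈ A
    · exact hU _ _ (by positivity) hTA.2.2 hy
    have hopen : ∀ᶠ t in 𝓝 T, y ∈ Q t := by
      have : IsOpen {t : ℝ | dist y (x + t • (c - x)) < t * r} :=
        isOpen_lt (by fun_prop) (by fun_prop)
      exact this.mem_nhds hy
    obtain ⟨l, hl, hl'⟩ := exists_Ioc_subset_of_mem_nhds hopen ⟨T - 1, by linarith⟩
    obtain ⟨t, htA, htl⟩ := exists_lt_of_lt_csSup hAne hl
    have : y ∈ Q t := hl' ⟨htl, le_csSup hAbdd htA⟩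
    exact hU _ _ (mul_pos htA.1 hr) htA.2.2 this
  · change μ (E ∩ Q T) ≤ γ * μ (Q T)
    rcases hT1.eq_or_lt with h1 | h1
    · rw [h1, hQ1]; exact hE
    have hlim2 : Tendsto (μ ∘ Q) (𝓝[>] T) (𝓝 (μ (⋂ t > T, Q t))) := by
      refine tendsto_measure_biInter_gt ?_ ?_ ⟨T + 1, by simp, hfin _ _⟩
      · intro t _; exact Metric.isOpen_ball.measurableSet.nullMeasurableSet
      · intro i j _ hij; exact hmono hij
    have hsub : (⋂ t > T, Q t) ⊆ Metric.closedBall (x + T • (c - x)) (T * r) := by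
      intro y hy
      simp only [mem_iInter] at hy
      have hy' : ∀ᶠ t in 𝓝[>] T, dist y (x + t • (c - x)) ≤ t * r := by
        filter_upwards [self_mem_nhdsWithin] with t ht
        exact (Metric.mem_ball.1 (hy t ht)).le
      have e1 : Tendsto (fun t : ℝ => dist y (x + t • (c - x))) (𝓝[>] T)
          (𝓝 (dist y (x + T • (c - x)))) :=
        (Continuous.tendsto (by fun_prop) T).mono_left nhdsWithin_le_nhds
      have e2 : Tendsto (fun t : ℝ => t * r) (𝓝[>] T) (𝓝 (T * r)) :=
        (Continuous.tendsto (by fun_prop) T).mono_left nhdsWithin_le_nhds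
      exact le_of_tendsto_of_tendsto e1 e2 hy'
    have hle : μ (⋂ t > T, Q t) ≤ μ (Q T) := by
      rw [← closedBall_measure_eq μ K hK _ _ (by positivity : 0 < T * r)]
      exact measure_mono hsub
    have hlim3 := ENNReal.Tendsto.const_mul (a := γ) hlim2 (Or.inr (hγ.trans_le le_top).ne)
    refine le_trans ?_ (mul_le_mul_right hle γ)
    refine ge_of_tendsto hlim3 ?_
    filter_upwards [Ioc_mem_nhdsGT h1] with t ht
    refine (measure_mono (inter_subset_inter_right _ (hmono ht.1.le))).trans ?_
    by_contra hcon
    have : t ∈ A := ⟨hT0.trans ht.1, ht.2, not_le.1 hcon⟩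
    exact absurd (le_csSup hAbdd this) (not_le.2 ht.1)

lemma growth_ball (μ : Measure X) [IsLocallyFiniteMeasure μ] (K : NNReal)
    (hK : ∀ c r, 0 < r → μ (Metric.ball c (2 * r)) ≤ K * μ (Metric.ball c r))
    (hfin : ∀ c r, μ (Metric.ball c r) ≠ ⊤)
    (γ : ℝ≥0∞) (hγ : γ < 1) (E : Set X) (hEm : MeasurableSet E) (c : X) (r : ℝ) (hr : 0 < r)
    (hE : μ (E ∩ Metric.ball c r) ≤ γ * μ (Metric.ball c r)) (U : Set X)
    (hU : ∀ c' r', 0 < r' → γ * μ (Metric.ball c' r') < μ (E ∩ Metric.ball c' r') →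
      Metric.ball c' r' ⊆ U) :
    (1 - γ) * μ (E ∩ Metric.ball c r) ≤ K ^ 3 * μ ((U ∩ Metric.ball c r) \ E) := by
  have hgood := good_ball μ K hK hfin γ hγ E c r hr hE U hU
  rw [ae_restrict_iff' hEm] at hgood
  set A : Set X := {x | x ∈ E ∧ x ∈ Metric.ball c r ∧ ∃ c' r', 0 < r' ∧ r' ≤ r ∧
      x ∈ Metric.ball c' r' ∧ Metric.ball c' r' ⊆ Metric.ball c r ∧ Metric.ball c' r' ⊆ U ∧
      μ (E ∩ Metric.ball c' r') ≤ γ * μ (Metric.ball c' r')} with hA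
  have hμA : μ (E ∩ Metric.ball c r) ≤ μ A := by
    refine measure_mono_ae ?_
    filter_upwards [hgood] with x hx hxE
    exact ⟨hxE.1, hxE.2, hx hxE.1 hxE.2⟩
  have hch : ∀ x : X, ∃ p : X × ℝ, x ∈ A → (0 < p.2 ∧ p.2 ≤ r ∧
      x ∈ Metric.ball p.1 p.2 ∧ Metric.ball p.1 p.2 ⊆ Metric.ball c r ∧ Metric.ball p.1 p.2 ⊆ U ∧
      μ (E ∩ Metric.ball p.1 p.2) ≤ γ * μ (Metric.ball p.1 p.2)) := by
    intro x
    by_cases hx : x ∈ A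
    · obtain ⟨c', r', h⟩ := hx.2.2
      exact ⟨(c', r'), fun _ => h⟩
    · exact ⟨(0, 0), fun h => absurd h hx⟩
  choose p hp using hch
  obtain ⟨u, huA, hdisj, hcov⟩ := Vitali.exists_disjoint_subfamily_covering_enlargement_closedBall
    A (fun x => (p x).1) (fun x => (p x).2) r (fun x hx => (hp x hx).2.1) 5 (by norm_num)
  have hdisj' : u.PairwiseDisjoint fun a => Metric.ball (p a).1 (p a).2 :=
    hdisj.mono fun a => Metric.ball_subset_closedBall
  have hcount : u.Countable := by
    refine hdisj'.countable_of_isOpen (fun _ _ => Metric.isOpen_ball) ?_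
    intro a ha
    exact ⟨a, (hp a (huA ha)).2.2.1⟩
  have h5 : ∀ a ∈ u, (1 - γ) * μ (Metric.closedBall (p a).1 (5 * (p a).2)) ≤
      K ^ 3 * μ (Metric.ball (p a).1 (p a).2 \ E) := by
    intro a ha
    obtain ⟨q0, -, -, -, -, q5⟩ := hp a (huA ha)
    set b := (p a).1
    set s := (p a).2
    have e1 : μ (Metric.closedBall b (5 * s)) ≤ K ^ 3 * μ (Metric.ball b s) := by
      calc μ (Metric.closedBall b (5 * s)) ≤ μ (Metric.ball b (2 * (2 * (2 * s)))) :=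
            measure_mono (Metric.closedBall_subset_ball (by linarith))
        _ ≤ K * μ (Metric.ball b (2 * (2 * s))) := hK _ _ (by linarith)
        _ ≤ K * (K * μ (Metric.ball b (2 * s))) := by gcongr; exact hK _ _ (by linarith)
        _ ≤ K * (K * (K * μ (Metric.ball b s))) := by gcongr; exact hK _ _ (by linarith)
        _ = _ := by ring
    have e2 : (1 - γ) * μ (Metric.ball b s) ≤ μ (Metric.ball b s \ E) := by
      rw [ENNReal.sub_mul (fun _ _ => hfin _ _), one_mul]
      refine tsub_le_iff_left.2 ?_
      rw [← measure_inter_add_sdiff (Metric.ball b s) hEm, inter_comm]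
      gcongr
      exact q5.trans (by rw [inter_comm, measure_inter_add_sdiff _ hEm])
    calc _ ≤ (1 - γ) * (K ^ 3 * μ (Metric.ball b s)) := by gcongr
      _ = K ^ 3 * ((1 - γ) * μ (Metric.ball b s)) := by ring
      _ ≤ _ := by gcongr
  have hAcov : A ⊆ ⋃ a ∈ u, Metric.closedBall (p a).1 (5 * (p a).2) := by
    intro x hx
    obtain ⟨b, hb, hsub⟩ := hcov x hx
    exact mem_iUnion₂.2 ⟨b, hb, hsub (Metric.ball_subset_closedBall (hp x hx).2.2.1)⟩
  calc (1 - γ) * μ (E ∩ Metric.ball c r)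
      ≤ (1 - γ) * μ (⋃ a ∈ u, Metric.closedBall (p a).1 (5 * (p a).2)) := by
        exact mul_le_mul_right (hμA.trans (measure_mono hAcov)) _
    _ ≤ (1 - γ) * ∑' a : u, μ (Metric.closedBall (p a).1 (5 * (p a).2)) := by
        exact mul_le_mul_right (measure_biUnion_le μ hcount _) _
    _ = ∑' a : u, (1 - γ) * μ (Metric.closedBall (p a).1 (5 * (p a).2)) :=
        ENNReal.tsum_mul_left.symm
    _ ≤ ∑' a : u, K ^ 3 * μ (Metric.ball (p a).1 (p a).2 \ E) :=
        ENNReal.tsum_le_tsum fun a => h5 a a.2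
    _ = K ^ 3 * ∑' a : u, μ (Metric.ball (p a).1 (p a).2 \ E) := ENNReal.tsum_mul_left
    _ = K ^ 3 * μ (⋃ a ∈ u, Metric.ball (p a).1 (p a).2 \ E) := by
        rw [measure_biUnion hcount (hdisj'.mono fun a => sdiff_subset)]
        intro a _; exact Metric.isOpen_ball.measurableSet.diff hEm
    _ ≤ _ := by
        gcongr
        refine iUnion₂_subset fun a ha => ?_
        obtain ⟨q0, -, -, q3, q4, q5⟩ := hp a (huA ha)
        exact fun y hy => ⟨⟨q4 hy.1, q3 hy.1⟩, hy.2⟩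

end CubeLemma
section Geometry

variable {n : ℕ}

lemma rect_param {R : Set (EuclideanSpace ℝ (Fin n))} (hR : IsRect R) :
    ∃ T : (Fin n → ℝ) ≃ₜ EuclideanSpace ℝ (Fin n),
      (∀ (c : Fin n → ℝ) (r : ℝ) (u : Fin n → ℝ), T (c + r • u) = T c + r • (T u - T 0)) ∧
      R = T '' Metric.ball 0 1 := by
  obtain ⟨f, S, ⟨a, b, hab, rfl⟩, rfl⟩ := hR
  have hpos : ∀ i, 0 < (b i - a i) / 2 := fun i => by linarith [hab i]
  let D : (Fin n → ℝ) ≃ₜ EuclideanSpace ℝ (Fin n) :=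
    { toFun := fun u => WithLp.toLp 2 (fun i => (a i + b i) / 2 + (b i - a i) / 2 * u i)
      invFun := fun x => fun i => (x i - (a i + b i) / 2) / ((b i - a i) / 2)
      left_inv := by
        intro u; ext i
        have := (hpos i).ne'
        simp only [add_sub_cancel_left]
        exact mul_div_cancel_left₀ _ this
      right_inv := by
        intro x; ext i
        have := (hpos i).ne'
        simp only
        rw [mul_div_cancel₀ _ this]
        ring
      continuous_toFun := by fun_prop
      continuous_invFun := by fun_prop }
  have hD : ∀ u i, D u i = (a i + b i) / 2 + (b i - a i) / 2 * u i := fun u i => rfl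
  refine ⟨D.trans f.toHomeomorph, ?_, ?_⟩
  · intro c r u
    have hsub : ∀ p q, f p - f q = f.toRealAffineIsometryEquiv.linearIsometryEquiv (p - q) := by
      intro p q
      have := f.toRealAffineIsometryEquiv.map_vsub p q
      simpa using this.symm
    have h1 : D (c + r • u) - D c = r • (D u - D 0) := by
      ext i
      simp only [PiLp.sub_apply, PiLp.smul_apply, hD, Pi.add_apply, Pi.smul_apply, smul_eq_mul,
        Pi.zero_apply]
      ring
    change f (D (c + r • u)) = f (D c) + r • (f (D u) - f (D 0))
    rw [hsub (D u), ← map_smul, ← h1, ← hsub]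
    abel
  · have : {x : EuclideanSpace ℝ (Fin n) | ∀ i, x i ∈ Set.Ioo (a i) (b i)} =
        D '' Metric.ball 0 1 := by
      ext x
      rw [← D.apply_symm_apply x, D.injective.mem_set_image]
      generalize D.symm x = u
      rw [ball_pi _ zero_lt_one]
      simp only [mem_ofPred_eq, mem_Ioo, hD, mem_univ_pi, Pi.zero_apply, Metric.mem_ball,
        Real.dist_eq, sub_zero, abs_lt]
      refine forall_congr' fun i => ?_
      have := hpos i
      constructor
      · rintro ⟨h1, h2⟩
        constructor
        · by_contra h; nlinarith
        · by_contra h; nlinarith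
      · rintro ⟨h1, h2⟩
        constructor <;> nlinarith
    rw [this, Set.image_image]
    rfl

lemma image_ball_eq {R : Set (EuclideanSpace ℝ (Fin n))}
    (T : (Fin n → ℝ) ≃ₜ EuclideanSpace ℝ (Fin n))
    (hT : ∀ (c : Fin n → ℝ) (r : ℝ) (u : Fin n → ℝ), T (c + r • u) = T c + r • (T u - T 0))
    (hR : R = T '' Metric.ball 0 1) (c : Fin n → ℝ) (r : ℝ) (hr : 0 < r) :
    T '' Metric.ball c r = (T c - r • T 0) +ᵥ r • R := by
  have hb : Metric.ball c r = (fun u => c + r • u) '' Metric.ball (0 : Fin n → ℝ) 1 := by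
    have h := smul_unitBall_of_pos (E := Fin n → ℝ) hr
    have h' := Metric.vadd_ball c (0 : Fin n → ℝ) r
    rw [← h, vadd_eq_add, add_zero] at h'
    rw [← h', ← Set.image_smul, ← Set.image_vadd, Set.image_image]
    rfl
  rw [hb, hR, Set.image_image, ← Set.image_smul, ← Set.image_vadd, Set.image_image,
    Set.image_image]
  refine Set.image_congr fun u _ => ?_
  rw [hT, vadd_eq_add]
  module

/-- Basic package for a rectangle in a homothecy invariant doubling collection. -/
lemma rect_package (𝔊 : Set (Set (EuclideanSpace ℝ (Fin n))))
    (hG : ∀ R ∈ 𝔊, IsRect R) (hhom : HomothecyInvariant 𝔊)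
    (μ : Measure (EuclideanSpace ℝ (Fin n)))
    (hlocμ : IsLocallyFiniteMeasure μ) (Δ : ℝ) (hdbl : DoublingWrt μ 𝔊 Δ)
    (R : Set (EuclideanSpace ℝ (Fin n))) (hR : R ∈ 𝔊) :
    ∃ (T : (Fin n → ℝ) ≃ₜ EuclideanSpace ℝ (Fin n)) (μ' : Measure (Fin n → ℝ)),
      (∀ s, μ' s = μ (T '' s)) ∧ IsLocallyFiniteMeasure μ' ∧
      (∀ c r, μ' (Metric.ball c r) ≠ ⊤) ∧
      (∀ c r, 0 < r → T '' Metric.ball c r ∈ 𝔊) ∧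
      (∀ c r, 0 < r → μ' (Metric.ball c (2 * r)) ≤ (Real.toNNReal Δ : NNReal) * μ' (Metric.ball c r)) ∧
      R = T '' Metric.ball 0 1 := by
  obtain ⟨T, hT, hRT⟩ := rect_param (hG R hR)
  have happ : ∀ s, (μ.map T.symm) s = μ (T '' s) := by
    intro s
    have := T.symm.toMeasurableEquiv.map_apply (μ := μ) s
    rw [Homeomorph.toMeasurableEquiv_coe] at this
    rw [this, Homeomorph.image_eq_preimage_symm]
  have hfin : ∀ c r, (μ.map T.symm) (Metric.ball c r) ≠ ⊤ := by
    intro c r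
    rw [happ]
    refine ((measure_mono (Set.image_mono Metric.ball_subset_closedBall)).trans_lt ?_).ne
    exact ((isCompact_closedBall c r).image T.continuous).measure_lt_top
  have hmem : ∀ c r, 0 < r → T '' Metric.ball c r ∈ 𝔊 := by
    intro c r hr
    rw [image_ball_eq T hT hRT c r hr]
    exact (hhom _ ((hhom R hR).2 r hr)).1 _
  refine ⟨T, μ.map T.symm, happ, ⟨fun x => ⟨Metric.ball x 1, Metric.ball_mem_nhds x one_pos,
    (hfin x 1).lt_top⟩⟩, hfin, hmem, ?_, hRT⟩
  intro c r hr
  have hσ : T '' Metric.ball c (2 * r) = (-T c) +ᵥ (2 : ℝ) • (T '' Metric.ball c r) := by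
    rw [image_ball_eq T hT hRT c r hr, image_ball_eq T hT hRT c (2 * r) (by linarith)]
    rw [← Set.image_smul, ← Set.image_vadd, ← Set.image_smul, ← Set.image_vadd, ← Set.image_smul,
      ← Set.image_vadd]
    simp only [Set.image_image]
    refine Set.image_congr fun u _ => ?_
    simp only [vadd_eq_add]
    module
  rw [happ, happ, hσ]
  refine hdbl _ (hmem c r hr) _ ?_
  rw [← hσ]
  exact Set.image_mono (Metric.ball_subset_ball (by linarith))

lemma rect_open (𝔊 : Set (Set (EuclideanSpace ℝ (Fin n))))
    (hG : ∀ R ∈ 𝔊, IsRect R) (R : Set (EuclideanSpace ℝ (Fin n))) (hR : R ∈ 𝔊) :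
    IsOpen R := by
  obtain ⟨T, hT, rfl⟩ := rect_param (hG R hR)
  exact T.isOpenMap _ Metric.isOpen_ball

lemma rect_pos_fin (𝔊 : Set (Set (EuclideanSpace ℝ (Fin n))))
    (hG : ∀ R ∈ 𝔊, IsRect R) (hhom : HomothecyInvariant 𝔊)
    (μ : Measure (EuclideanSpace ℝ (Fin n)))
    (hlocμ : IsLocallyFiniteMeasure μ) (hμ : μ ≠ 0) (Δ : ℝ) (hdbl : DoublingWrt μ 𝔊 Δ)
    (R : Set (EuclideanSpace ℝ (Fin n))) (hR : R ∈ 𝔊) : μ R ≠ 0 ∧ μ R ≠ ⊤ := by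
  obtain ⟨T, μ', happ, hloc, hfin, hmem, hK, hRT⟩ :=
    rect_package 𝔊 hG hhom μ hlocμ Δ hdbl R hR
  rw [hRT, ← happ]
  refine ⟨fun h0 => ?_, hfin _ _⟩
  have hk : ∀ k : ℕ, μ' (Metric.ball 0 (2 ^ k)) = 0 := by
    intro k
    induction k with
    | zero => simpa using h0
    | succ k ih =>
      have := hK 0 (2 ^ k) (by positivity)
      rw [ih, mul_zero] at this
      rw [pow_succ']
      exact le_antisymm this zero_le
  have huniv : (Set.univ : Set (Fin n → ℝ)) ⊆ ⋃ k : ℕ, Metric.ball 0 (2 ^ k) := by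
    intro x _
    obtain ⟨k, hk⟩ := pow_unbounded_of_one_lt ‖x‖ (one_lt_two (α := ℝ))
    exact mem_iUnion.2 ⟨k, by simpa using hk⟩
  have h1 : μ' Set.univ = 0 :=
    measure_mono_null huniv (measure_iUnion_null hk)
  rw [happ, Set.image_univ, T.surjective.range_eq] at h1
  exact hμ (Measure.measure_univ_eq_zero.1 h1)

lemma growth_rect (𝔊 : Set (Set (EuclideanSpace ℝ (Fin n))))
    (hG : ∀ R ∈ 𝔊, IsRect R) (hhom : HomothecyInvariant 𝔊)
    (μ : Measure (EuclideanSpace ℝ (Fin n)))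
    (hlocμ : IsLocallyFiniteMeasure μ) (Δ : ℝ) (hdbl : DoublingWrt μ 𝔊 Δ)
    (γ : ℝ≥0∞) (hγ : γ < 1) (E U : Set (EuclideanSpace ℝ (Fin n))) (hE : MeasurableSet E)
    (hU : ∀ B ∈ 𝔊, γ * μ B < μ (E ∩ B) → B ⊆ U)
    (R : Set (EuclideanSpace ℝ (Fin n))) (hR : R ∈ 𝔊) (hER : μ (E ∩ R) ≤ γ * μ R) :
    (1 - γ) * μ (E ∩ R) ≤ ENNReal.ofReal Δ ^ 3 * μ ((U ∩ R) \ E) := by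
  obtain ⟨T, μ', happ, hloc, hfin, hmem, hK, hRT⟩ :=
    rect_package 𝔊 hG hhom μ hlocμ Δ hdbl R hR
  have hpre : ∀ (S : Set (EuclideanSpace ℝ (Fin n))) (B : Set (Fin n → ℝ)),
      T '' (T ⁻¹' S ∩ B) = S ∩ T '' B := by
    intro S B
    rw [inter_comm, Set.image_inter_preimage, inter_comm]
  have h := growth_ball μ' (Real.toNNReal Δ) hK hfin γ hγ (T ⁻¹' E)
    (T.continuous.measurable hE) 0 1 one_pos ?_ (T ⁻¹' U) ?_
  · rw [happ, happ, hpre, ← hRT] at h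
    have e : T '' ((T ⁻¹' U ∩ Metric.ball 0 1) \ T ⁻¹' E) = (U ∩ R) \ E := by
      rw [Set.image_sdiff T.injective, hpre, ← hRT, Set.image_preimage_eq _ T.surjective]
    rw [e] at h
    exact h
  · rw [happ, happ, hpre, ← hRT]; exact hER
  · intro c' r' hr' h
    rw [happ, happ, hpre] at h
    exact Set.image_subset_iff.1 (hU _ (hmem c' r' hr') h)

end Geometry

section Tauber

variable {n : ℕ}

lemma lt_maxOp_iff (μ : Measure (EuclideanSpace ℝ (Fin n)))
    (𝔊 : Set (Set (EuclideanSpace ℝ (Fin n)))) (f : EuclideanSpace ℝ (Fin n) → ℝ)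
    (t : ℝ≥0∞) (x : EuclideanSpace ℝ (Fin n)) :
    t < maxOp μ 𝔊 f x ↔ ∃ B ∈ 𝔊, x ∈ B ∧ 0 < μ B ∧
      t < (∫⁻ y in B, ENNReal.ofReal |f y| ∂μ) / μ B := by
  unfold maxOp
  simp only [lt_iSup_iff, exists_prop]

lemma isOpen_lt_maxOp (μ : Measure (EuclideanSpace ℝ (Fin n)))
    (𝔊 : Set (Set (EuclideanSpace ℝ (Fin n)))) (hO : ∀ B ∈ 𝔊, IsOpen B)
    (f : EuclideanSpace ℝ (Fin n) → ℝ) (t : ℝ≥0∞) :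
    IsOpen {x | t < maxOp μ 𝔊 f x} := by
  have : {x | t < maxOp μ 𝔊 f x} = ⋃₀ {B | B ∈ 𝔊 ∧ 0 < μ B ∧
      t < (∫⁻ y in B, ENNReal.ofReal |f y| ∂μ) / μ B} := by
    ext x
    rw [mem_ofPred_eq, lt_maxOp_iff]
    constructor
    · rintro ⟨B, h1, h2, h3, h4⟩
      exact ⟨B, ⟨h1, h3, h4⟩, h2⟩
    · rintro ⟨B, ⟨h1, h3, h4⟩, h2⟩
      exact ⟨B, h1, h2, h3, h4⟩
  rw [this]
  exact isOpen_sUnion fun B hB => hO B hB.1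

lemma measurable_maxOp (μ : Measure (EuclideanSpace ℝ (Fin n)))
    (𝔊 : Set (Set (EuclideanSpace ℝ (Fin n)))) (hO : ∀ B ∈ 𝔊, IsOpen B)
    (f : EuclideanSpace ℝ (Fin n) → ℝ) : Measurable (maxOp μ 𝔊 f) :=
  measurable_of_Ioi fun t => (isOpen_lt_maxOp μ 𝔊 hO f t).measurableSet

lemma lintegral_ind (μ : Measure (EuclideanSpace ℝ (Fin n)))
    (E B : Set (EuclideanSpace ℝ (Fin n))) (hE : MeasurableSet E) :
    ∫⁻ y in B, ENNReal.ofReal |E.indicator (1 : EuclideanSpace ℝ (Fin n) → ℝ) y| ∂μ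
      = μ (E ∩ B) := by
  have : (fun y => ENNReal.ofReal |E.indicator (1 : EuclideanSpace ℝ (Fin n) → ℝ) y|) =
      E.indicator 1 := by
    ext y
    by_cases hy : y ∈ E <;> simp [hy]
  rw [this, lintegral_indicator_one hE, Measure.restrict_apply hE]

lemma lt_maxOp_ind_iff (μ : Measure (EuclideanSpace ℝ (Fin n)))
    (𝔊 : Set (Set (EuclideanSpace ℝ (Fin n)))) (hpf : ∀ B ∈ 𝔊, μ B ≠ 0 ∧ μ B ≠ ⊤)
    (E : Set (EuclideanSpace ℝ (Fin n))) (hE : MeasurableSet E)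
    (t : ℝ≥0∞) (x : EuclideanSpace ℝ (Fin n)) :
    t < maxOp μ 𝔊 (E.indicator 1) x ↔ ∃ B ∈ 𝔊, x ∈ B ∧ t * μ B < μ (E ∩ B) := by
  rw [lt_maxOp_iff]
  refine exists_congr fun B => and_congr_right fun hB => and_congr_right fun _ => ?_
  rw [lintegral_ind μ E B hE, ENNReal.lt_div_iff_mul_lt (Or.inl (hpf B hB).1)
    (Or.inl (hpf B hB).2)]
  exact and_iff_right (pos_iff_ne_zero.2 (hpf B hB).1)

/-- One step of the halo iteration. -/
def haloStep (μ : Measure (EuclideanSpace ℝ (Fin n)))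
    (𝔊 : Set (Set (EuclideanSpace ℝ (Fin n)))) (γ : ℝ≥0∞)
    (E : Set (EuclideanSpace ℝ (Fin n))) : Set (EuclideanSpace ℝ (Fin n)) :=
  E ∪ {x | γ < maxOp μ 𝔊 (E.indicator 1) x}

lemma set_weak (𝔊 : Set (Set (EuclideanSpace ℝ (Fin n))))
    (hG : ∀ R ∈ 𝔊, IsRect R) (hhom : HomothecyInvariant 𝔊)
    (μ ν : Measure (EuclideanSpace ℝ (Fin n)))
    (hlocμ : IsLocallyFiniteMeasure μ) (hμ : μ ≠ 0)
    (Δ : ℝ) (hΔ : 1 < Δ) (hdbl : DoublingWrt μ 𝔊 Δ)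
    (γ c : ℝ) (hγ : γ ∈ Set.Ioo (0 : ℝ) 1) (hT : TauberianCond μ ν 𝔊 γ c) :
    ∃ D : ℝ≥0∞, D ≠ ⊤ ∧ ∀ (E : Set (EuclideanSpace ℝ (Fin n))), MeasurableSet E →
      ∀ m : ℕ, ν {x | (2⁻¹ : ℝ≥0∞) ^ m < maxOp μ 𝔊 (E.indicator 1) x} ≤ D ^ (m + 1) * ν E := by
  have hpf := rect_pos_fin 𝔊 hG hhom μ hlocμ hμ Δ hdbl
  have hO := rect_open 𝔊 hG
  set g : ℝ≥0∞ := ENNReal.ofReal γ with hg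
  have hg1 : g < 1 := by
    rw [hg, ← ENNReal.ofReal_one]
    exact (ENNReal.ofReal_lt_ofReal_iff one_pos).2 hγ.2
  set K : ℝ≥0∞ := ENNReal.ofReal Δ ^ 3 with hKdef
  have hK0 : K ≠ 0 := by
    rw [hKdef]; exact pow_ne_zero _ (by simpa using by linarith)
  have hKt : K ≠ ⊤ := ENNReal.pow_ne_top ENNReal.ofReal_ne_top
  set η : ℝ≥0∞ := (1 - g) / K with hη
  have hη0 : η ≠ 0 := by
    rw [hη, Ne, ENNReal.div_eq_zero_iff]
    push Not
    exact ⟨(tsub_pos_of_lt hg1).ne', hKt⟩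
  have h1η : 1 < 1 + η := ENNReal.lt_add_right ENNReal.one_ne_top hη0
  obtain ⟨N, hN⟩ : ∃ N : ℕ, 2 < (1 + η) ^ N := by
    have := (ENNReal.tendsto_pow_atTop_nhds_top_iff.2 h1η).eventually
      (lt_mem_nhds (ENNReal.ofNat_lt_top (n := 2)))
    exact this.exists
  set st := haloStep μ 𝔊 g with hst
  have hmeas : ∀ F, MeasurableSet F → MeasurableSet (st F) := by
    intro F hF
    exact hF.union (isOpen_lt_maxOp μ 𝔊 hO _ _).measurableSet
  have hgrow : ∀ F, MeasurableSet F → ∀ B ∈ 𝔊,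
      B ⊆ st F ∨ (1 + η) * μ (F ∩ B) ≤ μ (st F ∩ B) := by
    intro F hF B hB
    have hsub : ∀ B ∈ 𝔊, g * μ B < μ (F ∩ B) →
        B ⊆ {x | g < maxOp μ 𝔊 (F.indicator 1) x} := by
      intro B hB h x hx
      exact (lt_maxOp_ind_iff μ 𝔊 hpf F hF g x).2 ⟨B, hB, hx, h⟩
    by_cases h : g * μ B < μ (F ∩ B)
    · exact Or.inl ((hsub B hB h).trans subset_union_right)
    right
    have h1 := growth_rect 𝔊 hG hhom μ hlocμ Δ hdbl g hg1 F _ hF hsub B hB (not_lt.1 h)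
    have h2 : η * μ (F ∩ B) ≤
        μ (({x | g < maxOp μ 𝔊 (F.indicator 1) x} ∩ B) \ F) := by
      rw [hη, ENNReal.div_eq_inv_mul, mul_assoc]
      rw [ENNReal.inv_mul_le_iff hK0 hKt]
      exact h1
    rw [add_mul, one_mul]
    calc _ ≤ μ (F ∩ B) + μ (({x | g < maxOp μ 𝔊 (F.indicator 1) x} ∩ B) \ F) := by gcongr
      _ ≤ μ ((st F ∩ B) ∩ F) + μ ((st F ∩ B) \ F) := by
        refine add_le_add (measure_mono ?_) (measure_mono ?_)
        · exact fun y hy => ⟨⟨Or.inl hy.1, hy.2⟩, hy.1⟩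
        · exact fun y hy => ⟨⟨Or.inr hy.1.1, hy.1.2⟩, hy.2⟩
      _ = _ := measure_inter_add_sdiff _ hF
  set D0 : ℝ≥0∞ := 1 + ENNReal.ofReal c with hD0
  refine ⟨D0 ^ N, ENNReal.pow_ne_top (by simp [hD0]), ?_⟩
  intro E hE m
  have hmE : ∀ k, MeasurableSet (st^[k] E) := by
    intro k
    induction k with
    | zero => exact hE
    | succ k ih => rw [Function.iterate_succ_apply']; exact hmeas _ ih
  have hνE : ∀ k, ν (st^[k] E) ≤ D0 ^ k * ν E := by
    intro k
    induction k with
    | zero => simp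
    | succ k ih =>
      rw [Function.iterate_succ_apply']
      calc ν (st (st^[k] E)) ≤ ν (st^[k] E) + ENNReal.ofReal c * ν (st^[k] E) :=
            (measure_union_le _ _).trans (by gcongr; exact hT _ (hmE k))
        _ = D0 * ν (st^[k] E) := by rw [hD0]; ring
        _ ≤ D0 * (D0 ^ k * ν E) := by gcongr
        _ = _ := by ring
  have hsub : {x | (2⁻¹ : ℝ≥0∞) ^ m < maxOp μ 𝔊 (E.indicator 1) x} ⊆ st^[N * (m + 1)] E := by
    intro x hx
    obtain ⟨B, hB, hxB, hlt⟩ := (lt_maxOp_ind_iff μ 𝔊 hpf E hE _ x).1 hx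
    have hind : ∀ k, B ⊆ st^[k] E ∨ (1 + η) ^ k * (2⁻¹ ^ m * μ B) ≤ μ (st^[k] E ∩ B) := by
      intro k
      induction k with
      | zero => right; simpa using hlt.le
      | succ k ih =>
        rw [Function.iterate_succ_apply']
        rcases ih with h | h
        · exact Or.inl (h.trans subset_union_left)
        · rcases hgrow _ (hmE k) B hB with h' | h'
          · exact Or.inl h'
          · right
            refine le_trans ?_ h'
            rw [pow_succ', mul_assoc]
            gcongr
    rcases hind (N * (m + 1)) with h | h
    · exact h hxB
    exfalso
    have h3 : (1 + η) ^ (N * (m + 1)) * (2⁻¹ ^ m * μ B) ≤ μ B :=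
      h.trans (measure_mono inter_subset_right)
    have h4 : (2 : ℝ≥0∞) * μ B ≤ (1 + η) ^ (N * (m + 1)) * (2⁻¹ ^ m * μ B) := by
      rw [pow_mul, ← mul_assoc]
      gcongr
      calc (2 : ℝ≥0∞) = 2 ^ (m + 1) * 2⁻¹ ^ m := by
            rw [pow_succ', mul_assoc, ← mul_pow,
              ENNReal.mul_inv_cancel two_ne_zero ENNReal.ofNat_ne_top, one_pow, mul_one]
        _ ≤ _ := by gcongr
    have h5 : (2 : ℝ≥0∞) * μ B ≤ 1 * μ B := by rw [one_mul]; exact h4.trans h3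
    rw [ENNReal.mul_le_mul_iff_left (hpf B hB).1 (hpf B hB).2] at h5
    exact absurd h5 (not_le.2 ENNReal.one_lt_two)
  calc _ ≤ ν (st^[N * (m + 1)] E) := measure_mono hsub
    _ ≤ _ := hνE _
    _ = _ := by rw [pow_mul]

end Tauber

section Interp

variable {n : ℕ}

lemma two_zpow_add (a b : ℤ) : (2 : ℝ≥0∞) ^ (a + b) = 2 ^ a * 2 ^ b :=
  ENNReal.zpow_add two_ne_zero ENNReal.ofNat_ne_top a b

lemma two_zpow_ne_zero (a : ℤ) : (2 : ℝ≥0∞) ^ a ≠ 0 :=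
  (ENNReal.zpow_pos two_ne_zero ENNReal.ofNat_ne_top a).ne'

lemma two_zpow_ne_top (a : ℤ) : (2 : ℝ≥0∞) ^ a ≠ ⊤ :=
  (ENNReal.zpow_lt_top two_ne_zero ENNReal.ofNat_ne_top a).ne

lemma lt_of_two_zpow_lt {a b : ℤ} (h : (2 : ℝ≥0∞) ^ a < 2 ^ b) : a < b := by
  by_contra hcon
  exact absurd (ENNReal.zpow_le_of_le one_le_two (not_lt.1 hcon)) (not_le.2 h)

lemma pointwise_lower (p : ℝ) (hp : 0 < p) (y : ℝ≥0∞) :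
    y ^ p ≤ ∑' k : ℤ, (if (2 : ℝ≥0∞) ^ k < y then ((2 : ℝ≥0∞) ^ (k + 1)) ^ p else 0) := by
  rcases eq_or_ne y 0 with rfl | h0
  · simp [hp]
  rcases eq_or_ne y ⊤ with rfl | ht
  · rw [ENNReal.top_rpow_of_pos hp]
    refine top_le_iff.2 ?_
    refine top_le_iff.1 ?_
    have h1 : ∀ k : ℤ, (if (2 : ℝ≥0∞) ^ k < ⊤ then ((2 : ℝ≥0∞) ^ (k + 1)) ^ p else 0) =
        ((2 : ℝ≥0∞) ^ (k + 1)) ^ p := fun k => if_pos (two_zpow_ne_top k).lt_top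
    simp only [h1]
    calc (⊤ : ℝ≥0∞) = ∑' k : ℕ, (1 : ℝ≥0∞) := by
          rw [ENNReal.tsum_const]; simp
      _ ≤ ∑' k : ℕ, ((2 : ℝ≥0∞) ^ ((k : ℤ) + 1)) ^ p := by
          refine ENNReal.tsum_le_tsum fun k => ?_
          refine ENNReal.one_le_rpow ?_ hp
          rw [← zpow_zero (2 : ℝ≥0∞)]
          exact ENNReal.zpow_le_of_le one_le_two (by positivity)
      _ ≤ _ := ENNReal.tsum_comp_le_tsum_of_injective
          (f := fun k : ℕ => (k : ℤ)) Nat.cast_injective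
          (fun k : ℤ => ((2 : ℝ≥0∞) ^ (k + 1)) ^ p)
  · obtain ⟨k, hk⟩ := ENNReal.exists_mem_Ioc_zpow h0 ht ENNReal.one_lt_two ENNReal.ofNat_ne_top
    refine le_trans ?_ (ENNReal.le_tsum k)
    rw [if_pos hk.1]
    exact ENNReal.rpow_le_rpow hk.2 hp.le

lemma pointwise_upper (p : ℝ) (hp : 1 ≤ p) (y : ℝ≥0∞) (ht : y ≠ ⊤) :
    ∑' k : ℤ, (if (2 : ℝ≥0∞) ^ k < y then ((2 : ℝ≥0∞) ^ k) ^ p else 0) ≤ 2 * y ^ p := by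
  rcases eq_or_ne y 0 with rfl | h0
  · simp
  obtain ⟨k, hk⟩ := ENNReal.exists_mem_Ioc_zpow h0 ht ENNReal.one_lt_two ENNReal.ofNat_ne_top
  rw [← (Equiv.subLeft k).tsum_eq]
  simp only [Equiv.subLeft_apply]
  have hinj : Function.Injective (fun i : ℕ => (i : ℤ)) := Nat.cast_injective
  rw [← hinj.tsum_eq]
  · have hterm : ∀ i : ℕ, (if (2 : ℝ≥0∞) ^ (k - (i : ℤ)) < y then
        ((2 : ℝ≥0∞) ^ (k - (i : ℤ))) ^ p else 0) ≤ y ^ p * 2⁻¹ ^ i := by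
      intro i
      split_ifs
      · have e : (2 : ℝ≥0∞) ^ (k - (i : ℤ)) = 2 ^ k * 2⁻¹ ^ i := by
          rw [sub_eq_add_neg, two_zpow_add, ENNReal.zpow_neg, zpow_natCast, ENNReal.inv_pow]
        rw [e, ENNReal.mul_rpow_of_nonneg _ _ (by linarith)]
        gcongr
        · exact hk.1.le
        · have h1 : (2⁻¹ : ℝ≥0∞) ^ i ≤ 1 := pow_le_one₀ zero_le (by simp)
          calc ((2⁻¹ : ℝ≥0∞) ^ i) ^ p ≤ ((2⁻¹ : ℝ≥0∞) ^ i) ^ (1 : ℝ) :=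
                ENNReal.rpow_le_rpow_of_exponent_ge h1 hp
            _ = _ := ENNReal.rpow_one _
      · exact zero_le
    refine (ENNReal.tsum_le_tsum hterm).trans ?_
    rw [ENNReal.tsum_mul_left, ENNReal.tsum_geometric_two, mul_comm]
  · intro i hi
    by_contra hcon
    apply hi
    have hneg : i < 0 := by
      by_contra h
      exact hcon ⟨i.toNat, by simpa using h⟩
    refine if_neg ?_
    refine not_lt.2 (hk.2.trans (ENNReal.zpow_le_of_le one_le_two (by omega)))

lemma pointwise_decomp (k : ℤ) (y : ℝ≥0∞) (ht : y ≠ ⊤) :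
    y ≤ 2 ^ k + ∑' j : ℕ, (if (2 : ℝ≥0∞) ^ (k + j) < y then (2 : ℝ≥0∞) ^ (k + j + 1) else 0) := by
  by_cases h : y ≤ 2 ^ k
  · exact h.trans le_self_add
  have h' := not_le.1 h
  obtain ⟨l, hl⟩ := ENNReal.exists_mem_Ioc_zpow (ne_bot_of_gt h') ht ENNReal.one_lt_two
    ENNReal.ofNat_ne_top
  have hkl : k < l + 1 := lt_of_two_zpow_lt (h'.trans_le hl.2)
  obtain ⟨j, hj⟩ : ∃ j : ℕ, l = k + j := ⟨(l - k).toNat, by omega⟩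
  refine le_trans ?_ le_add_self
  refine le_trans ?_ (ENNReal.le_tsum j)
  rw [← hj, if_pos hl.1]
  exact hl.2

/-- Level set inclusion. -/
lemma maxOp_level (μ : Measure (EuclideanSpace ℝ (Fin n)))
    (𝔊 : Set (Set (EuclideanSpace ℝ (Fin n)))) (hpf : ∀ B ∈ 𝔊, μ B ≠ 0 ∧ μ B ≠ ⊤)
    (f : EuclideanSpace ℝ (Fin n) → ℝ) (hf : Measurable f) (k : ℤ)
    (x : EuclideanSpace ℝ (Fin n)) (hx : (2 : ℝ≥0∞) ^ (k + 3) < maxOp μ 𝔊 f x) :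
    ∃ j : ℕ, (2⁻¹ : ℝ≥0∞) ^ (2 * j) <
      maxOp μ 𝔊 ({y | (2 : ℝ≥0∞) ^ (k + j) < ENNReal.ofReal |f y|}.indicator 1) x := by
  by_contra hcon
  push Not at hcon
  have hFm : ∀ l : ℤ, MeasurableSet {y | (2 : ℝ≥0∞) ^ l < ENNReal.ofReal |f y|} := fun l =>
    measurableSet_lt measurable_const (by fun_prop)
  obtain ⟨B, hB, hxB, hB0, hlt⟩ := (lt_maxOp_iff μ 𝔊 f _ x).1 hx
  have hj : ∀ j : ℕ, μ ({y | (2 : ℝ≥0∞) ^ (k + j) < ENNReal.ofReal |f y|} ∩ B) ≤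
      2⁻¹ ^ (2 * j) * μ B := by
    intro j
    by_contra h
    exact absurd ((lt_maxOp_ind_iff μ 𝔊 hpf _ (hFm _) _ x).2 ⟨B, hB, hxB, not_le.1 h⟩)
      (not_lt.2 (hcon j))
  have hintB : ∫⁻ y in B, ENNReal.ofReal |f y| ∂μ ≤ 2 ^ (k + 3) * μ B := by
    calc ∫⁻ y in B, ENNReal.ofReal |f y| ∂μ
        ≤ ∫⁻ y in B, (2 ^ k + ∑' j : ℕ, (if (2 : ℝ≥0∞) ^ (k + j) < ENNReal.ofReal |f y|
            then (2 : ℝ≥0∞) ^ (k + j + 1) else 0)) ∂μ :=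
          lintegral_mono fun y => pointwise_decomp k _ ENNReal.ofReal_ne_top
      _ = 2 ^ k * μ B + ∑' j : ℕ, 2 ^ (k + j + 1) *
            μ ({y | (2 : ℝ≥0∞) ^ (k + j) < ENNReal.ofReal |f y|} ∩ B) := by
          rw [lintegral_add_left measurable_const, setLIntegral_const, lintegral_tsum]
          · congr 1
            refine tsum_congr fun j => ?_
            have : (fun y => if (2 : ℝ≥0∞) ^ (k + j) < ENNReal.ofReal |f y|
                then (2 : ℝ≥0∞) ^ (k + j + 1) else 0) =
                {y | (2 : ℝ≥0∞) ^ (k + j) < ENNReal.ofReal |f y|}.indicator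
                  (fun _ => (2 : ℝ≥0∞) ^ (k + j + 1)) := by
              ext y; simp [Set.indicator_apply]
            rw [this, lintegral_indicator_const (hFm _), Measure.restrict_apply (hFm _)]
          · intro j
            exact (Measurable.ite (hFm _) measurable_const measurable_const).aemeasurable
      _ ≤ 2 ^ k * μ B + ∑' j : ℕ, 2 ^ (k + j + 1) * (2⁻¹ ^ (2 * j) * μ B) := by
          gcongr with j; exact hj j
      _ = 2 ^ k * μ B + ∑' j : ℕ, (2 ^ k * 2 * μ B) * 2⁻¹ ^ j := by
          congr 1
          refine tsum_congr fun j => ?_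
          rw [two_zpow_add, two_zpow_add, zpow_one, zpow_natCast, two_mul, pow_add]
          have : (2 : ℝ≥0∞) ^ j * 2⁻¹ ^ j = 1 := by
            rw [← mul_pow, ENNReal.mul_inv_cancel two_ne_zero ENNReal.ofNat_ne_top, one_pow]
          calc _ = 2 ^ k * 2 * μ B * 2⁻¹ ^ j * ((2 : ℝ≥0∞) ^ j * 2⁻¹ ^ j) := by ring
            _ = _ := by rw [this, mul_one]
      _ = 5 * (2 ^ k * μ B) := by
          rw [ENNReal.tsum_mul_left, ENNReal.tsum_geometric_two]; ring
      _ ≤ 8 * (2 ^ k * μ B) := by gcongr; norm_num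
      _ = _ := by
          rw [two_zpow_add]
          have : (2 : ℝ≥0∞) ^ (3 : ℤ) = 8 := by
            rw [show (3 : ℤ) = ((3 : ℕ) : ℤ) from rfl, zpow_natCast]; norm_num
          rw [this]; ring
  rw [ENNReal.lt_div_iff_mul_lt (Or.inl (hpf B hB).1) (Or.inl (hpf B hB).2)] at hlt
  exact absurd hintB (not_le.2 hlt)

lemma bounded_of_weak (μ ν : Measure (EuclideanSpace ℝ (Fin n)))
    (𝔊 : Set (Set (EuclideanSpace ℝ (Fin n)))) (hO : ∀ B ∈ 𝔊, IsOpen B)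
    (hpf : ∀ B ∈ 𝔊, μ B ≠ 0 ∧ μ B ≠ ⊤) (D : ℝ≥0∞) (hD : D ≠ ⊤)
    (hw : ∀ (E : Set (EuclideanSpace ℝ (Fin n))), MeasurableSet E →
      ∀ m : ℕ, ν {x | (2⁻¹ : ℝ≥0∞) ^ m < maxOp μ 𝔊 (E.indicator 1) x} ≤ D ^ (m + 1) * ν E)
    (p : ℝ) (hp : 1 ≤ p) (hpD : D ^ 2 < 2 ^ p) : BoundedOnLp μ ν 𝔊 p := by
  have hp0 : 0 < p := by linarith
  have h2p0 : (2 : ℝ≥0∞) ^ p ≠ 0 := (ENNReal.rpow_pos two_pos ENNReal.ofNat_ne_top).ne'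
  have h2pt : (2 : ℝ≥0∞) ^ p ≠ ⊤ := ENNReal.rpow_ne_top_of_nonneg hp0.le ENNReal.ofNat_ne_top
  set q : ℝ≥0∞ := D ^ 2 * (2 ^ p)⁻¹ with hq
  have hq1 : q < 1 := by
    rw [hq, ← div_eq_mul_inv, ENNReal.div_lt_iff (Or.inl h2p0) (Or.inl h2pt), one_mul]
    exact hpD
  refine ⟨D * (16 : ℝ≥0∞) ^ p * (1 - q)⁻¹ * 2, ?_, ?_⟩
  · refine ENNReal.mul_ne_top (ENNReal.mul_ne_top (ENNReal.mul_ne_top hD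
      (ENNReal.rpow_ne_top_of_nonneg hp0.le ENNReal.ofNat_ne_top)) ?_) ENNReal.ofNat_ne_top
    rw [ENNReal.inv_ne_top]
    exact (tsub_pos_of_lt hq1).ne'
  intro f hf
  set F : ℤ → Set (EuclideanSpace ℝ (Fin n)) :=
    fun l => {y | (2 : ℝ≥0∞) ^ l < ENNReal.ofReal |f y|} with hF
  have hFm : ∀ l : ℤ, MeasurableSet (F l) := fun l =>
    measurableSet_lt measurable_const (by fun_prop)
  have hlev : ∀ k : ℤ, ν {x | (2 : ℝ≥0∞) ^ k < maxOp μ 𝔊 f x} ≤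
      ∑' j : ℕ, D ^ (2 * j + 1) * ν (F (k - 3 + j)) := by
    intro k
    have hsub : {x | (2 : ℝ≥0∞) ^ k < maxOp μ 𝔊 f x} ⊆ ⋃ j : ℕ,
        {x | (2⁻¹ : ℝ≥0∞) ^ (2 * j) < maxOp μ 𝔊 ((F (k - 3 + j)).indicator 1) x} := by
      intro x hx
      obtain ⟨j, hj⟩ := maxOp_level μ 𝔊 hpf f hf (k - 3) x (by simpa using hx)
      exact mem_iUnion.2 ⟨j, hj⟩
    refine (measure_mono hsub).trans ((measure_iUnion_le _).trans ?_)
    exact ENNReal.tsum_le_tsum fun j => hw _ (hFm _) _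
  have hMm := measurable_maxOp μ 𝔊 hO f
  calc ∫⁻ x, maxOp μ 𝔊 f x ^ p ∂ν
      ≤ ∫⁻ x, ∑' k : ℤ, (if (2 : ℝ≥0∞) ^ k < maxOp μ 𝔊 f x
          then ((2 : ℝ≥0∞) ^ (k + 1)) ^ p else 0) ∂ν :=
        lintegral_mono fun x => pointwise_lower p hp0 _
    _ = ∑' k : ℤ, ((2 : ℝ≥0∞) ^ (k + 1)) ^ p * ν {x | (2 : ℝ≥0∞) ^ k < maxOp μ 𝔊 f x} := by
        have hm : ∀ k : ℤ, MeasurableSet {x | (2 : ℝ≥0∞) ^ k < maxOp μ 𝔊 f x} := fun k =>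
          measurableSet_lt measurable_const hMm
        rw [lintegral_tsum]
        · refine tsum_congr fun k => ?_
          rw [← lintegral_indicator_const (hm k)]
          refine lintegral_congr fun x => ?_
          simp [Set.indicator_apply]
        · intro k
          exact (Measurable.ite (hm k) measurable_const measurable_const).aemeasurable
    _ ≤ ∑' k : ℤ, ((2 : ℝ≥0∞) ^ (k + 1)) ^ p *
          ∑' j : ℕ, D ^ (2 * j + 1) * ν (F (k - 3 + j)) := by
        gcongr with k; exact hlev k
    _ = ∑' j : ℕ, ∑' k : ℤ, ((2 : ℝ≥0∞) ^ (k + 1)) ^ p *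
          (D ^ (2 * j + 1) * ν (F (k - 3 + j))) := by
        rw [ENNReal.tsum_comm]
        exact tsum_congr fun k => ENNReal.tsum_mul_left.symm
    _ = ∑' j : ℕ, ∑' l : ℤ, (D * 16 ^ p * q ^ j) * (((2 : ℝ≥0∞) ^ l) ^ p * ν (F l)) := by
        refine tsum_congr fun j => ?_
        rw [← (Equiv.addRight (3 - (j : ℤ))).tsum_eq]
        refine tsum_congr fun l => ?_
        simp only [Equiv.coe_addRight]
        have e1 : l + (3 - (j : ℤ)) - 3 + j = l := by ring
        have e2 : l + (3 - (j : ℤ)) + 1 = l + (4 + -(j : ℤ)) := by ring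
        have e3 : ((2 : ℝ≥0∞) ^ (l + (4 + -(j : ℤ)))) ^ p =
            ((2 : ℝ≥0∞) ^ l) ^ p * (16 ^ p * ((2 ^ p)⁻¹) ^ j) := by
          rw [two_zpow_add, two_zpow_add, ENNReal.zpow_neg, zpow_natCast,
            ENNReal.mul_rpow_of_nonneg _ _ hp0.le, ENNReal.mul_rpow_of_nonneg _ _ hp0.le,
            ENNReal.inv_rpow]
          have h16 : (2 : ℝ≥0∞) ^ (4 : ℤ) = 16 := by
            rw [show (4 : ℤ) = ((4 : ℕ) : ℤ) from rfl, zpow_natCast]; norm_num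
          have hc : ((2 : ℝ≥0∞) ^ j) ^ p = (2 ^ p) ^ j := by
            rw [← ENNReal.rpow_natCast, ← ENNReal.rpow_mul, mul_comm, ENNReal.rpow_mul,
              ENNReal.rpow_natCast]
          rw [h16, hc, ENNReal.inv_pow]
        rw [e1, e2, e3, hq, mul_pow, ← pow_mul]
        ring
    _ = D * 16 ^ p * (1 - q)⁻¹ * ∑' l : ℤ, ((2 : ℝ≥0∞) ^ l) ^ p * ν (F l) := by
        simp only [ENNReal.tsum_mul_left, ENNReal.tsum_mul_right, ENNReal.tsum_geometric]
    _ = D * 16 ^ p * (1 - q)⁻¹ * ∫⁻ x, ∑' l : ℤ, (if (2 : ℝ≥0∞) ^ l < ENNReal.ofReal |f x|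
          then ((2 : ℝ≥0∞) ^ l) ^ p else 0) ∂ν := by
        congr 1
        rw [lintegral_tsum]
        · refine tsum_congr fun k => ?_
          rw [← lintegral_indicator_const (hFm k)]
          refine lintegral_congr fun x => ?_
          simp [Set.indicator_apply, hF]
        · intro k
          exact (Measurable.ite (hFm k) measurable_const measurable_const).aemeasurable
    _ ≤ D * 16 ^ p * (1 - q)⁻¹ * ∫⁻ x, 2 * ENNReal.ofReal |f x| ^ p ∂ν := by
        gcongr with x
        exact pointwise_upper p hp _ ENNReal.ofReal_ne_top
    _ = _ := by
        rw [lintegral_const_mul' _ _ ENNReal.ofNat_ne_top]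
        ring

end Interp

/-- For a homothecy invariant collection `𝔊` of open rectangles (not
necessarily axis-parallel) and locally finite Borel measures `μ, ν` with `μ` nonzero and
doubling w.r.t. `𝔊`: the Tauberian condition at some fixed level `γ ∈ (0,1)` for
`M_{𝔊,μ}` w.r.t. `ν` holds iff there is `p₀ > 1` such that `M_{𝔊,μ}` is bounded on
`L^p(ν)` for all `p > p₀`. -/
theorem statement5 (n : ℕ) (𝔊 : Set (Set (EuclideanSpace ℝ (Fin n))))
    (hG : ∀ R ∈ 𝔊, IsRect R) (hhom : HomothecyInvariant 𝔊)
    (μ ν : Measure (EuclideanSpace ℝ (Fin n)))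
    (hlocμ : IsLocallyFiniteMeasure μ) (hlocν : IsLocallyFiniteMeasure ν)
    (hμ : μ ≠ 0) (hdbl : ∃ Δ : ℝ, 1 < Δ ∧ DoublingWrt μ 𝔊 Δ) :
    (∃ γ ∈ Set.Ioo (0 : ℝ) 1, ∃ c : ℝ, 0 < c ∧ TauberianCond μ ν 𝔊 γ c)
    ↔ (∃ p₀ : ℝ, 1 < p₀ ∧ ∀ p : ℝ, p₀ < p → BoundedOnLp μ ν 𝔊 p) := by
  obtain ⟨Δ, hΔ, hdbl⟩ := hdbl
  have hpf := rect_pos_fin 𝔊 hG hhom μ hlocμ hμ Δ hdbl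
  have hO := rect_open 𝔊 hG
  constructor
  · rintro ⟨γ, hγ, c, hc, hT⟩
    obtain ⟨D, hD, hw⟩ := set_weak 𝔊 hG hhom μ ν hlocμ hμ Δ hΔ hdbl γ c hγ hT
    obtain ⟨N, hN⟩ : ∃ N : ℕ, D ^ 2 < 2 ^ N := by
      have := (ENNReal.tendsto_pow_atTop_nhds_top_iff.2 ENNReal.one_lt_two).eventually
        (lt_mem_nhds (ENNReal.pow_lt_top (n := 2) hD.lt_top))
      exact this.exists
    refine ⟨(N : ℝ) + 2, by have := N.cast_nonneg (α := ℝ); linarith, fun p hp => ?_⟩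
    have hN0 : (0 : ℝ) ≤ N := N.cast_nonneg
    refine bounded_of_weak μ ν 𝔊 hO hpf D hD hw p (by linarith) (hN.trans_le ?_)
    rw [← ENNReal.rpow_natCast]
    exact ENNReal.rpow_le_rpow_of_exponent_le one_le_two (by linarith)
  · rintro ⟨p₀, hp₀, hb⟩
    obtain ⟨C, hC, hb⟩ := hb (p₀ + 1) (by linarith)
    set p := p₀ + 1 with hp
    have hp0 : 0 < p := by linarith
    refine ⟨1 / 2, by norm_num, (C * 2 ^ p).toReal + 1, by positivity, ?_⟩
    intro E hE
    have h2pt : (2 : ℝ≥0∞) ^ p ≠ ⊤ := ENNReal.rpow_ne_top_of_nonneg hp0.le ENNReal.ofNat_ne_top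
    have h2p0 : (2 : ℝ≥0∞) ^ p ≠ 0 := (ENNReal.rpow_pos two_pos ENNReal.ofNat_ne_top).ne'
    have hle : C * 2 ^ p ≤ ENNReal.ofReal ((C * 2 ^ p).toReal + 1) := by
      rw [ENNReal.ofReal_add ENNReal.toReal_nonneg zero_le_one,
        ENNReal.ofReal_toReal (ENNReal.mul_ne_top hC h2pt)]
      exact le_self_add
    have hM := measurable_maxOp μ 𝔊 hO (E.indicator 1)
    have h1 : ((2 : ℝ≥0∞) ^ p)⁻¹ * ν {x | ENNReal.ofReal (1 / 2) <
        maxOp μ 𝔊 (E.indicator 1) x} ≤ C * ν E := by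
      calc _ ≤ ((2 : ℝ≥0∞) ^ p)⁻¹ *
            ν {x | ((2 : ℝ≥0∞) ^ p)⁻¹ ≤ maxOp μ 𝔊 (E.indicator 1) x ^ p} := by
            refine mul_le_mul_right (measure_mono ?_) _
            intro x hx
            rw [mem_ofPred_eq] at hx ⊢
            rw [← ENNReal.inv_rpow]
            refine ENNReal.rpow_le_rpow ?_ hp0.le
            refine le_trans (le_of_eq ?_) hx.le
            rw [one_div, ENNReal.ofReal_inv_of_pos two_pos, ENNReal.ofReal_ofNat]
        _ ≤ ∫⁻ x, maxOp μ 𝔊 (E.indicator 1) x ^ p ∂ν :=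
            mul_meas_ge_le_lintegral (hM.pow_const p) _
        _ ≤ _ := hb _ (measurable_one.indicator hE)
        _ = C * ν E := by
            congr 1
            rw [← lintegral_indicator_one hE]
            refine lintegral_congr fun x => ?_
            by_cases hx : x ∈ E <;> simp [hx, hp0]
    rw [ENNReal.inv_mul_le_iff h2p0 h2pt] at h1
    refine h1.trans ?_
    calc 2 ^ p * (C * ν E) = C * 2 ^ p * ν E := by ring
      _ ≤ _ := by gcongr
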